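/- Assume condition (A2) holds with limit I ∈ (0,∞) and that ϱ_α ∈ (0,1) satisfies ϱ_α → 0 and |log ϱ_α|/|log α| → 0 as α → 0; write Δ(α) = Δ(α,ϱ_α) and let T_α = T((1−α)/(ϱ_α α)) be the SR procedure. Then (i) for every ν ≥ 0, inf_{τ∈Δ(α)} R_ν(τ) / R_ν(T_α) → 1 as α → 0, and inf_{τ∈Δ(α)} sup_{ν≥0} R_ν(τ) / sup_{ν≥0} R_ν(T_α) → 1, with inf_{τ∈Δ(α)} R_ν(τ) ~ R_ν(T_α) ~ |log α|/I and inf_{τ∈Δ(α)} sup_{ν≥0} R_ν(τ) ~ sup_{ν≥0} R_ν(T_α) ~ |log α|/I; and (ii) if in addition k*_α satisfies k*_α → ∞ and |log α| + k*_α·log(1−ϱ_α) → +∞, then for every fixed ν ≥ 0, inf_{τ∈Δ(α)} R*_ν(τ) / R*_ν(T_α) → 1, inf_{τ∈Δ(α)} max_{0≤ν≤k*_α} R*_ν(τ) / max_{0≤ν≤k*_α} R*_ν(T_α) → 1, and both quantities are asymptotically equivalent to |log α|/I as α → 0. -/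

import Mathlib

open MeasureTheory Filter Set Topology ENNReal

noncomputable section

/-- A general change-point model: a filtration `F` on `Ω`, probability measures `P k`
(the change occurs immediately after time `k`) and `Pinf` (no change), such that `P k`
and `Pinf` agree on `F n` for `n ≤ k` and are mutually absolutely continuous
on `F n` for `n > k`. -/
structure ChangePointModel (Ω : Type) [m0 : MeasurableSpace Ω] where
  F : ℕ → MeasurableSpace Ω
  F_le : ∀ n, F n ≤ m0
  F_mono : Monotone F
  F_zero : F 0 = ⊥
  P : ℕ → Measure Ω
  Pinf : Measure Ω
  P_prob : ∀ k, IsProbabilityMeasure (P k)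
  Pinf_prob : IsProbabilityMeasure Pinf
  agree : ∀ k n : ℕ, n ≤ k → (P k).trim (F_le n) = Pinf.trim (F_le n)
  ac₁ : ∀ k n : ℕ, k < n → (P k).trim (F_le n) ≪ Pinf.trim (F_le n)
  ac₂ : ∀ k n : ℕ, k < n → Pinf.trim (F_le n) ≪ (P k).trim (F_le n)

namespace ChangePointModel

variable {Ω : Type} [m0 : MeasurableSpace Ω] (M : ChangePointModel Ω)

/-- The log-likelihood ratio `Z n k = log (d(P k|F n)/d(P∞|F n))`. -/
def Z (n k : ℕ) (ω : Ω) : ℝ :=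
  Real.log ((((M.P k).trim (M.F_le n)).rnDeriv (M.Pinf.trim (M.F_le n))) ω).toReal

/-- A detection procedure: a stopping time of the filtration `F` with values in `{1,2,…,∞}`. -/
def IsDetection (τ : Ω → ℕ∞) : Prop :=
  (∀ ω, 1 ≤ τ ω) ∧ ∀ n : ℕ, MeasurableSet[M.F n] {ω | τ ω ≤ (n : ℕ∞)}

/-- The detection risk `R_ν(τ) = E_ν (τ - ν)⁺`. -/
def risk (ν : ℕ) (τ : Ω → ℕ∞) : ℝ≥0∞ :=
  ∫⁻ ω, ((τ ω - (ν : ℕ∞) : ℕ∞) : ℝ≥0∞) ∂(M.P ν)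

/-- The conditional detection risk `R*_ν(τ) = E_ν (τ - ν | τ > ν)`. -/
def crisk (ν : ℕ) (τ : Ω → ℕ∞) : ℝ≥0∞ :=
  M.risk ν τ / M.P ν {ω | (ν : ℕ∞) < τ ω}

/-- The moment-`ℓ` detection risk `E_ν ((τ - ν)⁺)^ℓ`. -/
def riskPow (ℓ : ℝ) (ν : ℕ) (τ : Ω → ℕ∞) : ℝ≥0∞ :=
  ∫⁻ ω, ((τ ω - (ν : ℕ∞) : ℕ∞) : ℝ≥0∞) ^ ℓ ∂(M.P ν)

/-- The conditional moment-`ℓ` detection risk `E_ν ((τ - ν)^ℓ | τ > ν)`. -/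
def criskPow (ℓ : ℝ) (ν : ℕ) (τ : Ω → ℕ∞) : ℝ≥0∞ :=
  M.riskPow ℓ ν τ / M.P ν {ω | (ν : ℕ∞) < τ ω}

/-- The Bayesian class `Δ(α,ϱ)` of detection procedures with weighted probability of
false alarm at most `α` (geometric prior with parameter `ϱ`). -/
def Delta (α ϱ : ℝ) : Set (Ω → ℕ∞) :=
  {τ | M.IsDetection τ ∧
    ∑' k : ℕ, ENNReal.ofReal (ϱ * (1 - ϱ) ^ k) * M.Pinf {ω | τ ω ≤ (k : ℕ∞)}
      ≤ ENNReal.ofReal α}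

/-- The Shiryaev–Roberts statistic `R_n = ∑_{k=1}^n exp (Z_n^{k-1})`. -/
def SRstat (n : ℕ) (ω : Ω) : ℝ :=
  ∑ k ∈ Finset.range n, Real.exp (M.Z n k ω)

/-- The Shiryaev–Roberts procedure with threshold `h`. -/
def SR (h : ℝ) (ω : Ω) : ℕ∞ :=
  sInf {n : ℕ∞ | ∃ m : ℕ, n = (m : ℕ∞) ∧ 1 ≤ m ∧ h ≤ M.SRstat m ω}

/-- Condition (A1): `Z (k+n) k / n → I` almost surely under `P k`, for every `k`. -/
def CondA1 (I : ℝ) : Prop :=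
  ∀ k : ℕ, ∀ᵐ ω ∂(M.P k),
    Tendsto (fun n : ℕ => M.Z (k + n) k ω / n) atTop (𝓝 I)

/-- Condition (A2): uniform complete convergence of `Z (k+n) k / n` to `I`. -/
def CondA2 (I : ℝ) : Prop :=
  ∀ ε : ℝ, 0 < ε →
    (∑' n : ℕ, ⨆ k : ℕ,
      M.P k {ω | ε < |M.Z (k + (n + 1)) k ω / (n + 1) - I|}) < ⊤

/-- Uniform `r`-complete convergence of `Z (k+n) k / n` to `I`. -/
def CondAr (r I : ℝ) : Prop :=
  ∀ ε : ℝ, 0 < ε →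
    (∑' n : ℕ, ENNReal.ofReal ((n + 1 : ℝ) ^ (r - 1)) * ⨆ k : ℕ,
      M.P k {ω | ε < |M.Z (k + (n + 1)) k ω / (n + 1) - I|}) < ⊤

/-- The class `H(β,k*,m*)` : local probability of a false alarm in windows of
length `m*` starting at `1 ≤ k ≤ k* - m*` is at most `β`. -/
def Hclass (β : ℝ) (kstar mstar : ℕ) : Set (Ω → ℕ∞) :=
  {τ | M.IsDetection τ ∧ ∀ k : ℕ, 1 ≤ k → k + mstar ≤ kstar →
    M.Pinf {ω | (k : ℕ∞) ≤ τ ω ∧ τ ω < ((k + mstar : ℕ) : ℕ∞)} ≤ ENNReal.ofReal β}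

/-- The class `H*(β,k*,m*)` : local conditional probability of a false alarm
`P_∞(τ < k+m* | τ > k)` is at most `β` for `1 ≤ k ≤ k* - m*`. -/
def HclassStar (β : ℝ) (kstar mstar : ℕ) : Set (Ω → ℕ∞) :=
  {τ | M.IsDetection τ ∧ ∀ k : ℕ, 1 ≤ k → k + mstar ≤ kstar →
    M.Pinf {ω | (k : ℕ∞) < τ ω ∧ τ ω < ((k + mstar : ℕ) : ℕ∞)}
        / M.Pinf {ω | (k : ℕ∞) < τ ω} ≤ ENNReal.ofReal β}

end ChangePointModel

/-- `ϱ_{1,β} = 1/(1+|log β|)`. -/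
def rho1 (β : ℝ) : ℝ := 1 / (1 + |Real.log β|)

/-- `ϱ_{2,β} = ϱ_{1,β}/(1+|log|log β||)`. -/
def rho2 (β : ℝ) : ℝ := rho1 β / (1 + |Real.log (|Real.log β|)|)

/-- `α₁(β,m*) = β + (1-ϱ_{1,β})^{m*+1}`. -/
def alpha1 (β : ℝ) (m : ℕ) : ℝ := β + (1 - rho1 β) ^ (m + 1)

/-- `α₂(β,k*) = β (1-ϱ_{2,β})^{k*}`. -/
def alpha2 (β : ℝ) (k : ℕ) : ℝ := β * (1 - rho2 β) ^ k

/-- `α₃(β,k*) = β (1-ϱ_{2,β})^{k*} / (1+β)`. -/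
def alpha3 (β : ℝ) (k : ℕ) : ℝ := β * (1 - rho2 β) ^ k / (1 + β)

/-!
Lower bound: by a change of measure, `P_ν(τ ≤ ν + K) ≤ e ^ b P_∞(τ ≤ ν + K) + P_ν(Z_{ν+K}^ν > b)`.
A procedure in `Δ(α)` has `P_∞(τ ≤ k) ≤ α / (1 - ϱ_α) ^ k`, so for `K ≈ c |log α| / I` with `c < 1`
and `b` slightly above `K I` the right-hand side vanishes as `α → 0`, and the risk is at least about
`K`.

Upper bound: under `P_∞` the statistic `R_n` is a submartingale with mean `n`, so Doob's maximal
inequality gives `P_∞(T(h) ≤ k) ≤ k / h`, whence `T_α ∈ Δ(α)`. Since `R_{ν+n} ≥ exp (Z_{ν+n}^ν)`,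
the event `T(h) > ν + n` with `n` slightly above `log h / I` is a large deviation of `Z`, and (A2)
makes the tail sum of the risk bounded uniformly in `ν`. For the threshold of `T_α`,
`log h ~ |log α|` because `|log ϱ_α|` is negligible.

The conditional risk differs by the factor `1 / P_∞(τ > ν)`, which tends to `1` uniformly in
`ν ≤ k*_α`.
-/

theorem toENNReal_eq_tsum_lt (t : ℕ∞) :
    (t : ℝ≥0∞) = ∑' j : ℕ, if (j : ℕ∞) < t then 1 else 0 := by
  induction t using ENat.recTopCoe with
  | top => simp
  | coe m =>
    rw [tsum_eq_sum (s := Finset.range m) fun j hj => by simpa using hj,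
      Finset.sum_congr rfl fun j hj => if_pos (Nat.cast_lt.2 (Finset.mem_range.1 hj))]
    simp

theorem lintegral_toENNReal_eq_tsum {Ω : Type*} [MeasurableSpace Ω] (μ : Measure Ω)
    {t : Ω → ℕ∞} (ht : ∀ j : ℕ, MeasurableSet {ω | (j : ℕ∞) < t ω}) :
    ∫⁻ ω, (t ω : ℝ≥0∞) ∂μ = ∑' j : ℕ, μ {ω | (j : ℕ∞) < t ω} := by
  simp_rw [toENNReal_eq_tsum_lt]
  rw [lintegral_tsum fun j =>
    (Measurable.ite (ht j) measurable_const measurable_const).aemeasurable]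
  refine tsum_congr fun j => ?_
  simpa only [indicator_apply, mem_ofPred_eq, Pi.one_apply] using
    lintegral_indicator_one (μ := μ) (ht j)

theorem hasSum_geometric_tail {ϱ : ℝ} (h0 : 0 < ϱ) (h1 : ϱ < 1) (k : ℕ) :
    HasSum (fun j : ℕ => ϱ * (1 - ϱ) ^ (j + k)) ((1 - ϱ) ^ k) := by
  have hgeom := (hasSum_geometric_of_lt_one (sub_nonneg.2 h1.le) (sub_lt_self 1 h0)).mul_left
    (ϱ * (1 - ϱ) ^ k)
  rw [_root_.sub_sub_cancel, mul_right_comm, mul_inv_cancel₀ h0.ne', one_mul] at hgeom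
  exact hgeom.congr_fun fun j => by ring

theorem hasSum_geometric_mul_natCast {ϱ : ℝ} (h0 : 0 < ϱ) (h1 : ϱ < 1) :
    HasSum (fun k : ℕ => ϱ * (1 - ϱ) ^ k * k) ((1 - ϱ) / ϱ) := by
  have hnorm : ‖1 - ϱ‖ < 1 := by
    rw [Real.norm_of_nonneg (sub_nonneg.2 h1.le)]
    exact sub_lt_self 1 h0
  have hgeom := (hasSum_coe_mul_geometric_of_norm_lt_one hnorm).mul_left ϱ
  rw [_root_.sub_sub_cancel, show ϱ * ((1 - ϱ) / ϱ ^ 2) = (1 - ϱ) / ϱ by field_simp] at hgeom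
  exact hgeom.congr_fun fun k => by ring

section Asymptotics

variable {ι : Type*} {l : Filter ι} {f g : ι → ℝ≥0∞}

theorem tendsto_div_nhds_one_of_mul_le_of_le_mul (hg0 : ∀ᶠ i in l, g i ≠ 0)
    (hgtop : ∀ᶠ i in l, g i ≠ ⊤) (hlower : ∀ c < 1, ∀ᶠ i in l, c * g i ≤ f i)
    (hupper : ∀ c > 1, ∀ᶠ i in l, f i ≤ c * g i) :
    Tendsto (fun i => f i / g i) l (𝓝 1) := by
  refine tendsto_order.2 ⟨fun a ha => ?_, fun a ha => ?_⟩
  · obtain ⟨c, hac, hc⟩ := exists_between ha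
    filter_upwards [hg0, hgtop, hlower c hc] with i h0 htop hi
    exact hac.trans_le ((ENNReal.le_div_iff_mul_le (.inl h0) (.inl htop)).2 hi)
  · obtain ⟨c, hc, hca⟩ := exists_between ha
    filter_upwards [hupper c hc] with i hi
    exact (ENNReal.div_le_of_le_mul hi).trans_lt hca

theorem tendsto_div_nhds_one_of_common_equiv {h : ι → ℝ≥0∞} (hh0 : ∀ᶠ i in l, h i ≠ 0)
    (hhtop : ∀ᶠ i in l, h i ≠ ⊤) (hf : Tendsto (fun i => f i / h i) l (𝓝 1))
    (hg : Tendsto (fun i => g i / h i) l (𝓝 1)) : Tendsto (fun i => f i / g i) l (𝓝 1) := by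
  have hratio := ENNReal.Tendsto.div hf (.inl one_ne_zero) hg (.inl ENNReal.one_ne_top)
  rw [ENNReal.div_self one_ne_zero ENNReal.one_ne_top] at hratio
  refine hratio.congr' ?_
  filter_upwards [hh0, hhtop] with i h0 htop
  rw [div_eq_mul_inv (f i), div_eq_mul_inv (g i)]
  exact ENNReal.mul_div_mul_right _ _ (ENNReal.inv_ne_zero.2 htop) (ENNReal.inv_ne_top.2 h0)

theorem tendsto_natCeil_mul_add_div_ofReal {c : ℝ} (hc : 0 ≤ c) {b : ℝ≥0∞} (hb : b ≠ ⊤) :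
    Tendsto (fun x : ℝ => (⌈c * x⌉₊ + b) / ENNReal.ofReal x) atTop (𝓝 (ENNReal.ofReal c)) := by
  have hceil : Tendsto (fun x : ℝ => (⌈c * x⌉₊ : ℝ≥0∞) / ENNReal.ofReal x) atTop
      (𝓝 (ENNReal.ofReal c)) := by
    refine (ENNReal.tendsto_ofReal (tendsto_nat_ceil_mul_div_atTop hc)).congr' ?_
    filter_upwards [eventually_gt_atTop 0] with x hx
    rw [ENNReal.ofReal_div_of_pos hx, ENNReal.ofReal_natCast]
  have hconst := ENNReal.Tendsto.const_div ENNReal.tendsto_ofReal_atTop (Or.inr hb)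
  simpa only [ENNReal.add_div, ENNReal.div_top, add_zero] using hceil.add hconst

end Asymptotics

/-! ### Asymptotics of the threshold -/

theorem tendsto_abs_log_nhdsGT_zero : Tendsto (fun α : ℝ => |Real.log α|) (𝓝[>] 0) atTop :=
  tendsto_abs_atBot_atTop.comp Real.tendsto_log_nhdsGT_zero

theorem eventually_mem_Ioo_zero_one : ∀ᶠ α : ℝ in 𝓝[>] 0, α ∈ Ioo (0 : ℝ) 1 :=
  Ioo_mem_nhdsGT one_pos

theorem tendsto_log_one_sub {ι : Type*} {l : Filter ι} {f : ι → ℝ} (hf : Tendsto f l (𝓝 0)) :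
    Tendsto (fun i => Real.log (1 - f i)) l (𝓝 0) := by
  have hsub : Tendsto (fun i => 1 - f i) l (𝓝 1) := by simpa using hf.const_sub 1
  simpa using hsub.log one_ne_zero

section Threshold

variable {ϱ : ℝ → ℝ}

theorem tendsto_log_threshold_div (hϱpos : ∀ᶠ α in 𝓝[>] 0, 0 < ϱ α)
    (hϱlog : Tendsto (fun α : ℝ => |Real.log (ϱ α)| / |Real.log α|) (𝓝[>] 0) (𝓝 0)) :
    Tendsto (fun α => Real.log ((1 - α) / (ϱ α * α)) / |Real.log α|) (𝓝[>] 0) (𝓝 1) := by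
  have hone_sub : Tendsto (fun α : ℝ => Real.log (1 - α) / |Real.log α|) (𝓝[>] 0) (𝓝 0) :=
    (tendsto_log_one_sub (tendsto_id.mono_left nhdsWithin_le_nhds)).div_atTop
      tendsto_abs_log_nhdsGT_zero
  have hϱ : Tendsto (fun α => Real.log (ϱ α) / |Real.log α|) (𝓝[>] 0) (𝓝 0) :=
    (tendsto_zero_iff_abs_tendsto_zero _).2 (by simpa [Function.comp_def, abs_div] using hϱlog)
  have hlim := (hone_sub.sub hϱ).add_const 1
  rw [sub_zero, zero_add] at hlim
  refine hlim.congr' ?_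
  filter_upwards [hϱpos, eventually_mem_Ioo_zero_one] with α hpos hα
  have hlog : Real.log α < 0 := Real.log_neg hα.1 hα.2
  rw [Real.log_div (sub_pos.2 hα.2).ne' (mul_pos hpos hα.1).ne',
    Real.log_mul hpos.ne' hα.1.ne', abs_of_neg hlog]
  have hne : Real.log α ≠ 0 := hlog.ne
  field_simp
  ring

theorem tendsto_threshold_atTop (hϱpos : ∀ᶠ α in 𝓝[>] 0, 0 < ϱ α)
    (hϱlog : Tendsto (fun α : ℝ => |Real.log (ϱ α)| / |Real.log α|) (𝓝[>] 0) (𝓝 0)) :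
    Tendsto (fun α => (1 - α) / (ϱ α * α)) (𝓝[>] 0) atTop := by
  have hlog : Tendsto (fun α => Real.log ((1 - α) / (ϱ α * α))) (𝓝[>] 0) atTop := by
    refine (tendsto_abs_log_nhdsGT_zero.atTop_mul_pos one_pos
      (tendsto_log_threshold_div hϱpos hϱlog)).congr' ?_
    filter_upwards [tendsto_abs_log_nhdsGT_zero.eventually_gt_atTop 0] with α hα
    exact mul_div_cancel₀ _ hα.ne'
  refine tendsto_atTop_mono' _ ?_ hlog
  filter_upwards [hϱpos, eventually_mem_Ioo_zero_one] with α hpos hα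
  exact Real.log_le_self (div_nonneg (sub_nonneg.2 hα.2.le) (mul_pos hpos hα.1).le)

theorem eventually_le_of_log_div_log_tendsto_zero (hϱpos : ∀ᶠ α in 𝓝[>] 0, 0 < ϱ α)
    (hϱlog : Tendsto (fun α : ℝ => |Real.log (ϱ α)| / |Real.log α|) (𝓝[>] 0) (𝓝 0)) :
    ∀ᶠ α in 𝓝[>] 0, α ≤ ϱ α := by
  filter_upwards [hϱpos, eventually_mem_Ioo_zero_one, hϱlog.eventually_lt_const one_pos,
    tendsto_abs_log_nhdsGT_zero.eventually_gt_atTop 0] with α hpos hα hlt hlogpos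
  rw [div_lt_one hlogpos, abs_of_neg (Real.log_neg hα.1 hα.2)] at hlt
  exact (Real.log_le_log_iff hα.1 hpos).1 (by linarith [neg_le_abs (Real.log (ϱ α))])

theorem div_one_sub_pow_eq_exp {α ρ : ℝ} (hα0 : 0 < α) (hα1 : α < 1) (hρ : ρ < 1) (n : ℕ) :
    α / (1 - ρ) ^ n = Real.exp (-(|Real.log α| + n * Real.log (1 - ρ))) := by
  rw [abs_of_neg (Real.log_neg hα0 hα1), neg_add, neg_neg, Real.exp_add, Real.exp_log hα0,
    Real.exp_neg, ← Real.log_pow, Real.exp_log (pow_pos (sub_pos.2 hρ) n), div_eq_mul_inv]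

theorem tendsto_div_one_sub_pow (hϱ0 : Tendsto ϱ (𝓝[>] 0) (𝓝 0)) {k : ℝ → ℕ}
    (hk : Tendsto (fun α => |Real.log α| + k α * Real.log (1 - ϱ α)) (𝓝[>] 0) atTop) :
    Tendsto (fun α => α / (1 - ϱ α) ^ k α) (𝓝[>] 0) (𝓝 0) := by
  refine (Real.tendsto_exp_neg_atTop_nhds_zero.comp hk).congr' ?_
  filter_upwards [eventually_mem_Ioo_zero_one, hϱ0.eventually_lt_const one_pos] with α hα hϱ
  exact (div_one_sub_pow_eq_exp hα.1 hα.2 hϱ _).symm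

theorem tendsto_exp_mul_div_one_sub_pow (hϱ0 : Tendsto ϱ (𝓝[>] 0) (𝓝 0)) {b : ℝ → ℝ}
    {m : ℝ → ℕ} {p q : ℝ} (hp : p < 1)
    (hb : Tendsto (fun α => b α / |Real.log α|) (𝓝[>] 0) (𝓝 p))
    (hm : Tendsto (fun α => m α / |Real.log α|) (𝓝[>] 0) (𝓝 q)) :
    Tendsto (fun α => Real.exp (b α) * (α / (1 - ϱ α) ^ m α)) (𝓝[>] 0) (𝓝 0) := by
  have hfactor := ((hm.mul (tendsto_log_one_sub hϱ0)).const_add 1).sub hb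
  rw [mul_zero, add_zero] at hfactor
  have hexponent := tendsto_abs_log_nhdsGT_zero.atTop_mul_pos (sub_pos.2 hp) hfactor
  refine (Real.tendsto_exp_neg_atTop_nhds_zero.comp hexponent).congr' ?_
  filter_upwards [eventually_mem_Ioo_zero_one, hϱ0.eventually_lt_const one_pos,
    tendsto_abs_log_nhdsGT_zero.eventually_gt_atTop 0] with α hα hϱ hpos
  rw [Function.comp_apply, div_one_sub_pow_eq_exp hα.1 hα.2 hϱ, ← Real.exp_add]
  congr 1
  field_simp
  ring

end Threshold

namespace ChangePointModel

variable {Ω : Type} [m0 : MeasurableSpace Ω] (M : ChangePointModel Ω)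

instance (k : ℕ) : IsProbabilityMeasure (M.P k) := M.P_prob k

instance : IsProbabilityMeasure M.Pinf := M.Pinf_prob

/-- The filtration `(F_n)` of the model, bundled so that Mathlib's martingale theory applies. -/
def filtration : Filtration ℕ m0 := ⟨M.F, M.F_mono, M.F_le⟩

/-! ### Change of measure -/

theorem measurable_Z (n k : ℕ) : Measurable[M.F n] (M.Z n k) :=
  Real.measurable_log.comp (Measure.measurable_rnDeriv _ _).ennreal_toReal

theorem trim_P_absolutelyContinuous (n k : ℕ) :
    (M.P k).trim (M.F_le n) ≪ M.Pinf.trim (M.F_le n) := by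
  rcases le_or_gt n k with h | h
  · rw [M.agree k n h]
  · exact M.ac₁ k n h

theorem trim_Pinf_absolutelyContinuous (n k : ℕ) :
    M.Pinf.trim (M.F_le n) ≪ (M.P k).trim (M.F_le n) := by
  rcases le_or_gt n k with h | h
  · rw [M.agree k n h]
  · exact M.ac₂ k n h

theorem P_eq_Pinf {n k : ℕ} (h : n ≤ k) {A : Set Ω} (hA : MeasurableSet[M.F n] A) :
    M.P k A = M.Pinf A := by
  rw [← trim_measurableSet_eq (M.F_le n) hA, M.agree k n h, trim_measurableSet_eq (M.F_le n) hA]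

-- `Z` is built from the junk-valued `Real.log` and `ENNReal.toReal`, but the Radon–Nikodym
-- derivative is almost surely positive and finite.
theorem setLIntegral_exp_Z (n k : ℕ) {A : Set Ω} (hA : MeasurableSet[M.F n] A) :
    ∫⁻ ω in A, ENNReal.ofReal (Real.exp (M.Z n k ω)) ∂M.Pinf = M.P k A := by
  have hmeas : Measurable[M.F n] fun ω => ENNReal.ofReal (Real.exp (M.Z n k ω)) :=
    (Real.measurable_exp.comp (M.measurable_Z n k)).ennreal_ofReal
  rw [← lintegral_trim (M.F_le n) hmeas, ← restrict_trim (M.F_le n) _ hA,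
    ← trim_measurableSet_eq (M.F_le n) hA,
    ← Measure.setLIntegral_rnDeriv (M.trim_P_absolutelyContinuous n k) A]
  refine setLIntegral_congr_fun_ae hA ?_
  filter_upwards [Measure.rnDeriv_pos' (M.trim_Pinf_absolutelyContinuous n k),
    Measure.rnDeriv_lt_top ((M.P k).trim (M.F_le n)) (M.Pinf.trim (M.F_le n))] with ω hpos htop _
  rw [Z, Real.exp_log (ENNReal.toReal_pos hpos.ne' htop.ne), ENNReal.ofReal_toReal htop.ne]

theorem aestronglyMeasurable_exp_Z (n k : ℕ) :
    AEStronglyMeasurable (fun ω => Real.exp (M.Z n k ω)) M.Pinf :=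
  (Real.measurable_exp.comp
    ((M.measurable_Z n k).mono (M.F_le n) le_rfl)).aestronglyMeasurable

theorem integrable_exp_Z (n k : ℕ) : Integrable (fun ω => Real.exp (M.Z n k ω)) M.Pinf := by
  refine (lintegral_ofReal_ne_top_iff_integrable (M.aestronglyMeasurable_exp_Z n k)
    (ae_of_all _ fun ω => (Real.exp_pos _).le)).1 ?_
  rw [← setLIntegral_univ, M.setLIntegral_exp_Z n k MeasurableSet.univ]
  exact measure_ne_top _ _

theorem setIntegral_exp_Z (n k : ℕ) {A : Set Ω} (hA : MeasurableSet[M.F n] A) :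
    ∫ ω in A, Real.exp (M.Z n k ω) ∂M.Pinf = (M.P k).real A := by
  rw [integral_eq_lintegral_of_nonneg_ae (ae_of_all _ fun ω => (Real.exp_pos _).le)
    (M.aestronglyMeasurable_exp_Z n k).restrict, M.setLIntegral_exp_Z n k hA, Measure.real]

theorem P_le_exp_mul_Pinf_add (n k : ℕ) (b : ℝ) {A : Set Ω} (hA : MeasurableSet[M.F n] A) :
    M.P k A ≤ ENNReal.ofReal (Real.exp b) * M.Pinf A + M.P k {ω | b < M.Z n k ω} := by
  set B := {ω | M.Z n k ω ≤ b}
  have hAB : MeasurableSet[M.F n] (A ∩ B) :=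
    hA.inter (measurableSet_le (M.measurable_Z n k) measurable_const)
  have hB : Bᶜ = {ω | b < M.Z n k ω} := by ext ω; simp [B]
  have hbounded : M.P k (A ∩ B) ≤ ENNReal.ofReal (Real.exp b) * M.Pinf A :=
    calc M.P k (A ∩ B)
        = ∫⁻ ω in A ∩ B, ENNReal.ofReal (Real.exp (M.Z n k ω)) ∂M.Pinf :=
          (M.setLIntegral_exp_Z n k hAB).symm
      _ ≤ ∫⁻ _ in A ∩ B, ENNReal.ofReal (Real.exp b) ∂M.Pinf :=
          setLIntegral_mono' (M.F_le n _ hAB) fun ω hω =>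
            ENNReal.ofReal_le_ofReal (Real.exp_le_exp.2 hω.2)
      _ = ENNReal.ofReal (Real.exp b) * M.Pinf (A ∩ B) := setLIntegral_const _ _
      _ ≤ ENNReal.ofReal (Real.exp b) * M.Pinf A := by gcongr; exact inter_subset_left
  calc M.P k A ≤ M.P k (A ∩ B) + M.P k (A \ B) := measure_le_inter_add_sdiff _ _ _
    _ ≤ ENNReal.ofReal (Real.exp b) * M.Pinf A + M.P k {ω | b < M.Z n k ω} :=
        add_le_add hbounded (measure_mono (hB ▸ fun _ hω => hω.2))

/-! ### Detection procedures and their risks -/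

section Detection

variable {M} {τ : Ω → ℕ∞}

theorem IsDetection.measurableSet_le (hτ : M.IsDetection τ) (n : ℕ) :
    MeasurableSet {ω | τ ω ≤ (n : ℕ∞)} :=
  M.F_le n _ (hτ.2 n)

theorem IsDetection.measurableSet_lt (hτ : M.IsDetection τ) (n : ℕ) :
    MeasurableSet {ω | (n : ℕ∞) < τ ω} := by
  simpa only [compl_ofPred, not_le] using (hτ.measurableSet_le n).compl

theorem IsDetection.measure_lt (hτ : M.IsDetection τ) (μ : Measure Ω) [IsProbabilityMeasure μ]
    (n : ℕ) : μ {ω | (n : ℕ∞) < τ ω} = 1 - μ {ω | τ ω ≤ (n : ℕ∞)} := by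
  simpa only [compl_ofPred, not_le] using prob_compl_eq_one_sub (μ := μ) (hτ.measurableSet_le n)

theorem IsDetection.risk_eq_tsum (hτ : M.IsDetection τ) (ν : ℕ) :
    M.risk ν τ = ∑' j : ℕ, M.P ν {ω | ((ν + j : ℕ) : ℕ∞) < τ ω} := by
  have hset (j : ℕ) :
      {ω | (j : ℕ∞) < τ ω - (ν : ℕ∞)} = {ω | ((ν + j : ℕ) : ℕ∞) < τ ω} := by
    simp_rw [lt_tsub_iff_left, Nat.cast_add]
  simp_rw [risk, ← hset]
  exact lintegral_toENNReal_eq_tsum _ fun j => hset j ▸ hτ.measurableSet_lt _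

theorem IsDetection.mul_le_risk (hτ : M.IsDetection τ) (ν K : ℕ) :
    K * (1 - M.P ν {ω | τ ω ≤ ((ν + K : ℕ) : ℕ∞)}) ≤ M.risk ν τ := by
  rw [← hτ.measure_lt, hτ.risk_eq_tsum]
  calc (K : ℝ≥0∞) * M.P ν {ω | ((ν + K : ℕ) : ℕ∞) < τ ω}
      = ∑ _j ∈ Finset.range K, M.P ν {ω | ((ν + K : ℕ) : ℕ∞) < τ ω} := by simp
    _ ≤ ∑ j ∈ Finset.range K, M.P ν {ω | ((ν + j : ℕ) : ℕ∞) < τ ω} := by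
        gcongr with j hj
        exact (Finset.mem_range.1 hj).le
    _ ≤ ∑' j : ℕ, M.P ν {ω | ((ν + j : ℕ) : ℕ∞) < τ ω} := ENNReal.sum_le_tsum _

end Detection

theorem risk_le_crisk (ν : ℕ) (τ : Ω → ℕ∞) : M.risk ν τ ≤ M.crisk ν τ := by
  simpa [crisk] using ENNReal.div_le_div_left (c := M.risk ν τ) prob_le_one

theorem Pinf_le_of_mem_Delta {α ϱ : ℝ} (h0 : 0 < ϱ) (h1 : ϱ < 1) {τ : Ω → ℕ∞}
    (hτ : τ ∈ M.Delta α ϱ) (k : ℕ) :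
    M.Pinf {ω | τ ω ≤ (k : ℕ∞)} ≤ ENNReal.ofReal (α / (1 - ϱ) ^ k) := by
  have hpos : 0 < 1 - ϱ := sub_pos.2 h1
  have htail := hasSum_geometric_tail h0 h1 k
  rw [ENNReal.ofReal_div_of_pos (pow_pos hpos k),
    ENNReal.le_div_iff_mul_le (.inl (by positivity)) (.inl ENNReal.ofReal_ne_top), mul_comm]
  calc ENNReal.ofReal ((1 - ϱ) ^ k) * M.Pinf {ω | τ ω ≤ (k : ℕ∞)}
      = ∑' j : ℕ, ENNReal.ofReal (ϱ * (1 - ϱ) ^ (j + k)) * M.Pinf {ω | τ ω ≤ (k : ℕ∞)} := by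
        rw [← htail.tsum_eq, ENNReal.ofReal_tsum_of_nonneg (fun j => by positivity) htail.summable,
          ENNReal.tsum_mul_right]
    _ ≤ ∑' j : ℕ, ENNReal.ofReal (ϱ * (1 - ϱ) ^ (j + k)) *
          M.Pinf {ω | τ ω ≤ ((j + k : ℕ) : ℕ∞)} := by
        gcongr
        exact Nat.le_add_left k _
    _ ≤ ∑' j : ℕ, ENNReal.ofReal (ϱ * (1 - ϱ) ^ j) * M.Pinf {ω | τ ω ≤ (j : ℕ∞)} :=
        ENNReal.tsum_comp_le_tsum_of_injective (add_left_injective k) fun j : ℕ =>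
          ENNReal.ofReal (ϱ * (1 - ϱ) ^ j) * M.Pinf {ω | τ ω ≤ (j : ℕ∞)}
    _ ≤ ENNReal.ofReal α := hτ.2

/-! ### The Shiryaev–Roberts procedure -/

theorem SRstat_nonneg (n : ℕ) (ω : Ω) : 0 ≤ M.SRstat n ω :=
  Finset.sum_nonneg fun _ _ => (Real.exp_pos _).le

theorem exp_Z_le_SRstat {n k : ℕ} (h : k < n) (ω : Ω) : Real.exp (M.Z n k ω) ≤ M.SRstat n ω :=
  Finset.single_le_sum (f := fun k => Real.exp (M.Z n k ω)) (fun _ _ => (Real.exp_pos _).le)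
    (Finset.mem_range.2 h)

theorem measurable_SRstat (n : ℕ) : Measurable[M.F n] (M.SRstat n) :=
  Finset.measurable_fun_sum _ fun k _ => Real.measurable_exp.comp (M.measurable_Z n k)

theorem setIntegral_SRstat (n : ℕ) {A : Set Ω} (hA : MeasurableSet[M.F n] A) :
    ∫ ω in A, M.SRstat n ω ∂M.Pinf = ∑ k ∈ Finset.range n, (M.P k).real A := by
  simp_rw [SRstat]
  rw [integral_finsetSum _ fun k _ => (M.integrable_exp_Z n k).integrableOn]
  exact Finset.sum_congr rfl fun k _ => M.setIntegral_exp_Z n k hA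

theorem submartingale_SRstat : Submartingale M.SRstat M.filtration M.Pinf := by
  refine submartingale_of_setIntegral_le_succ (fun n => (M.measurable_SRstat n).stronglyMeasurable)
    (fun n => integrable_finsetSum _ fun k _ => M.integrable_exp_Z n k) fun n A hA => ?_
  rw [M.setIntegral_SRstat n hA, M.setIntegral_SRstat (n + 1) (M.F_mono n.le_succ _ hA),
    Finset.sum_range_succ]
  exact le_add_of_nonneg_right measureReal_nonneg

theorem SR_le_iff (h : ℝ) (ω : Ω) (n : ℕ) :
    M.SR h ω ≤ (n : ℕ∞) ↔ ∃ m : ℕ, 1 ≤ m ∧ m ≤ n ∧ h ≤ M.SRstat m ω := by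
  rw [SR, ← ENat.lt_add_one_iff (ENat.natCast_ne_top n), sInf_lt_iff]
  constructor
  · rintro ⟨_, ⟨m, rfl, hm, hstat⟩, hlt⟩
    exact ⟨m, hm, Nat.lt_succ_iff.1 (by exact_mod_cast hlt), hstat⟩
  · rintro ⟨m, hm, hmn, hstat⟩
    exact ⟨m, ⟨m, rfl, hm, hstat⟩, by exact_mod_cast Nat.lt_succ_iff.2 hmn⟩

theorem isDetection_SR (h : ℝ) : M.IsDetection (M.SR h) := by
  refine ⟨fun ω => le_sInf ?_, fun n => ?_⟩
  · rintro _ ⟨m, rfl, hm, -⟩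
    exact_mod_cast hm
  · have hunion : {ω | M.SR h ω ≤ (n : ℕ∞)} =
        ⋃ m : ℕ, ⋃ (_ : 1 ≤ m ∧ m ≤ n), {ω | h ≤ M.SRstat m ω} := by
      ext ω
      simp [M.SR_le_iff, and_assoc]
    rw [hunion]
    exact .iUnion fun m => .iUnion fun hm =>
      M.F_mono hm.2 _ (measurableSet_le measurable_const (M.measurable_SRstat m))

-- Doob's maximal inequality for the submartingale `R_n`, whose mean under `P∞` is `n`.
theorem ofReal_mul_Pinf_SR_le (h : ℝ) (k : ℕ) :
    ENNReal.ofReal h * M.Pinf {ω | M.SR h ω ≤ (k : ℕ∞)} ≤ k := by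
  set crossed := {ω | (h.toNNReal : ℝ) ≤ (Finset.range (k + 1)).sup'
    Finset.nonempty_range_add_one fun n => M.SRstat n ω}
  have hcrossed : {ω | M.SR h ω ≤ (k : ℕ∞)} ⊆ crossed := by
    intro ω hω
    obtain ⟨m, -, hmk, hstat⟩ := (M.SR_le_iff h ω k).1 hω
    rw [mem_ofPred_eq, Finset.le_sup'_iff]
    refine ⟨m, Finset.mem_range.2 (Nat.lt_succ_iff.2 hmk), ?_⟩
    rw [Real.coe_toNNReal']
    exact max_le hstat (M.SRstat_nonneg m ω)
  calc ENNReal.ofReal h * M.Pinf {ω | M.SR h ω ≤ (k : ℕ∞)}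
      ≤ ENNReal.ofReal h * M.Pinf crossed := by gcongr
    _ ≤ ENNReal.ofReal (∫ ω in crossed, M.SRstat k ω ∂M.Pinf) :=
        maximal_ineq M.submartingale_SRstat M.SRstat_nonneg k
    _ ≤ ENNReal.ofReal (∫ ω, M.SRstat k ω ∂M.Pinf) :=
        ENNReal.ofReal_le_ofReal <| setIntegral_le_integral (M.submartingale_SRstat.integrable k)
          (ae_of_all _ (M.SRstat_nonneg k))
    _ = k := by
        rw [← setIntegral_univ, M.setIntegral_SRstat k MeasurableSet.univ]
        simp

theorem SR_mem_Delta {α ϱ h : ℝ} (h0 : 0 < ϱ) (h1 : ϱ < 1) (hh : 0 < h)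
    (hα : (1 - ϱ) / (ϱ * h) ≤ α) : M.SR h ∈ M.Delta α ϱ := by
  refine ⟨M.isDetection_SR h, ?_⟩
  have hpos : 0 < 1 - ϱ := sub_pos.2 h1
  have hsum := (hasSum_geometric_mul_natCast h0 h1).div_const h
  have hterm (k : ℕ) : M.Pinf {ω | M.SR h ω ≤ (k : ℕ∞)} ≤ ENNReal.ofReal (k / h) := by
    rw [ENNReal.ofReal_div_of_pos hh, ENNReal.ofReal_natCast, ENNReal.le_div_iff_mul_le
      (.inl (by positivity)) (.inl ENNReal.ofReal_ne_top), mul_comm]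
    exact M.ofReal_mul_Pinf_SR_le h k
  calc ∑' k : ℕ, ENNReal.ofReal (ϱ * (1 - ϱ) ^ k) * M.Pinf {ω | M.SR h ω ≤ (k : ℕ∞)}
      ≤ ∑' k : ℕ, ENNReal.ofReal (ϱ * (1 - ϱ) ^ k * k / h) := by
        refine ENNReal.tsum_le_tsum fun k => ?_
        rw [mul_div_assoc, ENNReal.ofReal_mul (mul_nonneg h0.le (pow_nonneg hpos.le k))]
        gcongr
        exact hterm k
    _ = ENNReal.ofReal ((1 - ϱ) / ϱ / h) := by
        rw [← ENNReal.ofReal_tsum_of_nonneg (fun k => by positivity) hsum.summable, hsum.tsum_eq]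
    _ ≤ ENNReal.ofReal α := ENNReal.ofReal_le_ofReal (by rwa [div_div])

/-! ### Upper bound for the Shiryaev–Roberts procedure -/

/-- The uniform deviation probability `sup_k P_k(|Z_{k+n+1}^k / (n+1) - I| > ε)`, i.e. the `n`-th
summand of `CondA2`; as there, `n` counts from `0`. -/
def deviationProb (I ε : ℝ) (n : ℕ) : ℝ≥0∞ :=
  ⨆ k : ℕ, M.P k {ω | ε < |M.Z (k + (n + 1)) k ω / (n + 1) - I|}

theorem P_lt_abs_sub_le_deviationProb (I ε : ℝ) (ν n : ℕ) :
    M.P ν {ω | ε < |M.Z (ν + (n + 1)) ν ω / (n + 1) - I|} ≤ M.deviationProb I ε n :=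
  le_iSup (fun k => M.P k {ω | ε < |M.Z (k + (n + 1)) k ω / (n + 1) - I|}) ν

theorem lt_abs_sub_of_lt_SR {I ε h : ℝ} {ν n : ℕ} (hn : Real.log h ≤ (n + 1) * (I - ε)) {ω : Ω}
    (hω : ((ν + (n + 1) : ℕ) : ℕ∞) < M.SR h ω) :
    ε < |M.Z (ν + (n + 1)) ν ω / (n + 1) - I| := by
  have hstat : M.SRstat (ν + (n + 1)) ω < h := by
    by_contra! hle
    exact hω.not_ge ((M.SR_le_iff h ω _).2 ⟨_, by omega, le_rfl, hle⟩)
  have hZ : M.Z (ν + (n + 1)) ν ω < (n + 1) * (I - ε) :=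
    calc M.Z (ν + (n + 1)) ν ω = Real.log (Real.exp (M.Z (ν + (n + 1)) ν ω)) :=
          (Real.log_exp _).symm
      _ < Real.log h := Real.log_lt_log (Real.exp_pos _)
          ((M.exp_Z_le_SRstat (by omega) ω).trans_lt hstat)
      _ ≤ (n + 1) * (I - ε) := hn
  have hslow : M.Z (ν + (n + 1)) ν ω / (n + 1) < I - ε := (div_lt_iff₀' (by positivity)).2 hZ
  exact lt_abs.2 (.inr (by linarith))

theorem risk_SR_le {I ε h : ℝ} (hεI : ε ≤ I) {N : ℕ} (hN : Real.log h ≤ N * (I - ε)) (ν : ℕ) :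
    M.risk ν (M.SR h) ≤ N + 1 + ∑' n, M.deviationProb I ε n := by
  have htail (n : ℕ) :
      M.P ν {ω | ((ν + (n + (N + 1)) : ℕ) : ℕ∞) < M.SR h ω} ≤ M.deviationProb I ε (n + N) := by
    refine (measure_mono fun ω hω => ?_).trans (M.P_lt_abs_sub_le_deviationProb I ε ν (n + N))
    refine M.lt_abs_sub_of_lt_SR (hN.trans ?_) hω
    have hNle : (N : ℝ) ≤ (n + N : ℕ) + 1 := by push_cast; linarith [n.cast_nonneg (α := ℝ)]
    exact mul_le_mul_of_nonneg_right hNle (sub_nonneg.2 hεI)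
  rw [(M.isDetection_SR h).risk_eq_tsum, ← Summable.sum_add_tsum_nat_add' (k := N + 1)
    ENNReal.summable]
  refine add_le_add ?_ ?_
  · calc ∑ j ∈ Finset.range (N + 1), M.P ν {ω | ((ν + j : ℕ) : ℕ∞) < M.SR h ω}
        ≤ ∑ _j ∈ Finset.range (N + 1), 1 := Finset.sum_le_sum fun _ _ => prob_le_one
      _ = N + 1 := by simp
  · exact (ENNReal.tsum_le_tsum htail).trans
      (ENNReal.tsum_comp_le_tsum_of_injective (add_left_injective N) _)

-- Off the deviation events of `CondA2` with `ε = I - I / b`, where `1 < b < c`, the drift of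
-- `Z` is at least `I / b`, so that about `b * log h / I` steps suffice to cross `h`.
theorem CondA2.eventually_risk_SR_le {M : ChangePointModel Ω} {I : ℝ} (hI : 0 < I)
    (hA2 : M.CondA2 I) {c : ℝ≥0∞} (hc : 1 < c) :
    ∀ᶠ h in atTop, ∀ ν, M.risk ν (M.SR h) ≤ c * ENNReal.ofReal (Real.log h / I) := by
  obtain ⟨b, hb1, hbc⟩ := ENNReal.lt_iff_exists_nnreal_btwn.1 hc
  have hb : (1 : ℝ) < b := by exact_mod_cast hb1
  set ε := I - I / b with hε
  have hε0 : 0 < ε := sub_pos.2 (div_lt_self hI hb)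
  have hrate : Tendsto (fun h => Real.log h / I) atTop atTop :=
    Real.tendsto_log_atTop.atTop_div_const hI
  have hbound := (tendsto_natCeil_mul_add_div_ofReal b.coe_nonneg
    (ENNReal.add_ne_top.2 ⟨ENNReal.one_ne_top, (hA2 ε hε0).ne⟩)).comp hrate
  rw [ENNReal.ofReal_coe_nnreal] at hbound
  filter_upwards [hbound.eventually_lt_const hbc, hrate.eventually_gt_atTop 0] with h hlt hpos ν
  have hN : Real.log h ≤ ⌈b * (Real.log h / I)⌉₊ * (I - ε) :=
    calc Real.log h = b * (Real.log h / I) * (I - ε) := by rw [hε]; field_simp; ring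
      _ ≤ ⌈b * (Real.log h / I)⌉₊ * (I - ε) := by
          gcongr
          · rw [hε, _root_.sub_sub_cancel]; positivity
          · exact Nat.le_ceil _
  refine (M.risk_SR_le (sub_le_self _ (by positivity)) hN ν).trans ?_
  rw [add_assoc]
  exact (ENNReal.div_le_iff (by simpa using hpos) ENNReal.ofReal_ne_top).1 hlt.le

theorem eventually_SR_threshold_mem_Delta {ϱ : ℝ → ℝ} (hϱpos : ∀ᶠ α in 𝓝[>] 0, 0 < ϱ α)
    (hϱlog : Tendsto (fun α : ℝ => |Real.log (ϱ α)| / |Real.log α|) (𝓝[>] 0) (𝓝 0))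
    (hϱ1 : ∀ᶠ α in 𝓝[>] 0, ϱ α < 1) :
    ∀ᶠ α in 𝓝[>] 0, M.SR ((1 - α) / (ϱ α * α)) ∈ M.Delta α (ϱ α) := by
  filter_upwards [hϱpos, hϱ1, eventually_mem_Ioo_zero_one,
    eventually_le_of_log_div_log_tendsto_zero hϱpos hϱlog] with α hpos hlt hα hle
  have hα1 : 0 < 1 - α := sub_pos.2 hα.2
  refine M.SR_mem_Delta hpos hlt (div_pos hα1 (mul_pos hpos hα.1)) ?_
  calc (1 - ϱ α) / (ϱ α * ((1 - α) / (ϱ α * α))) = α * ((1 - ϱ α) / (1 - α)) := by field_simp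
    _ ≤ α := mul_le_of_le_one_right hα.1.le ((div_le_one hα1).2 (by linarith))

theorem CondA2.eventually_risk_SR_threshold_le {M : ChangePointModel Ω} {I : ℝ} (hI : 0 < I)
    (hA2 : M.CondA2 I) {ϱ : ℝ → ℝ} (hϱpos : ∀ᶠ α in 𝓝[>] 0, 0 < ϱ α)
    (hϱlog : Tendsto (fun α : ℝ => |Real.log (ϱ α)| / |Real.log α|) (𝓝[>] 0) (𝓝 0))
    {c : ℝ≥0∞} (hc : 1 < c) :
    ∀ᶠ α in 𝓝[>] 0, ∀ ν, M.risk ν (M.SR ((1 - α) / (ϱ α * α))) ≤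
      c * ENNReal.ofReal (|Real.log α| / I) := by
  obtain ⟨b, hb1, hbc⟩ := exists_between hc
  have hratio := ENNReal.Tendsto.const_mul (a := b)
    (ENNReal.tendsto_ofReal (tendsto_log_threshold_div hϱpos hϱlog))
    (.inr (hbc.trans_le le_top).ne)
  rw [ENNReal.ofReal_one, mul_one] at hratio
  filter_upwards [(tendsto_threshold_atTop hϱpos hϱlog).eventually
      (hA2.eventually_risk_SR_le hI hb1), hratio.eventually_lt_const hbc,
    tendsto_abs_log_nhdsGT_zero.eventually_gt_atTop 0] with α hrisk hlt hpos ν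
  set h := (1 - α) / (ϱ α * α)
  calc M.risk ν (M.SR h) ≤ b * ENNReal.ofReal (Real.log h / I) := hrisk ν
    _ = b * ENNReal.ofReal (Real.log h / |Real.log α|) * ENNReal.ofReal (|Real.log α| / I) := by
        rw [mul_assoc, ← ENNReal.ofReal_mul' (by positivity), div_mul_div_cancel₀ hpos.ne']
    _ ≤ c * ENNReal.ofReal (|Real.log α| / I) := by gcongr

/-! ### Lower bound over the class `Δ(α)` -/

theorem CondA2.tendstoInMeasure {M : ChangePointModel Ω} {I : ℝ} (hA2 : M.CondA2 I) (ν : ℕ) :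
    TendstoInMeasure (M.P ν) (fun n ω => M.Z (ν + n) ν ω / n) atTop fun _ => I := by
  refine tendstoInMeasure_iff_norm.2 fun ε hε => (tendsto_add_atTop_iff_nat 1).1 ?_
  refine tendsto_of_tendsto_of_tendsto_of_le_of_le tendsto_const_nhds
    (ENNReal.tendsto_atTop_zero_of_tsum_ne_top (hA2 (ε / 2) (half_pos hε)).ne)
    (fun _ => zero_le) fun n => ?_
  refine (measure_mono fun ω hω => ?_).trans (M.P_lt_abs_sub_le_deviationProb I (ε / 2) ν n)
  simp only [mem_ofPred_eq, Nat.cast_add, Nat.cast_one, Real.norm_eq_abs] at hω ⊢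
  exact (half_lt_self hε).trans_le hω

section LowerBound

variable {M} {I : ℝ} {ν : ℕ}

theorem tendsto_P_mul_lt_Z {J : ℝ} (hIJ : I < J)
    (hZ : TendstoInMeasure (M.P ν) (fun n ω => M.Z (ν + n) ν ω / n) atTop fun _ => I) :
    Tendsto (fun n : ℕ => M.P ν {ω | J * n < M.Z (ν + n) ν ω}) atTop (𝓝 0) := by
  refine tendsto_of_tendsto_of_tendsto_of_le_of_le' tendsto_const_nhds
    (tendstoInMeasure_iff_norm.1 hZ (J - I) (sub_pos.2 hIJ)) (.of_forall fun _ => zero_le) ?_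
  filter_upwards [eventually_gt_atTop 0] with n hn
  refine measure_mono fun ω hω => ?_
  have hdrift : J < M.Z (ν + n) ν ω / n := (lt_div_iff₀ (Nat.cast_pos.2 hn)).2 hω
  exact (sub_le_sub_right hdrift.le I).trans (Real.le_norm_self _)

theorem P_stop_le_of_mem_Delta {α ϱ : ℝ} (h0 : 0 < ϱ) (h1 : ϱ < 1) {τ : Ω → ℕ∞}
    (hτ : τ ∈ M.Delta α ϱ) (ν n : ℕ) (b : ℝ) :
    M.P ν {ω | τ ω ≤ (n : ℕ∞)} ≤
      ENNReal.ofReal (Real.exp b * (α / (1 - ϱ) ^ n)) + M.P ν {ω | b < M.Z n ν ω} := by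
  refine (M.P_le_exp_mul_Pinf_add n ν b (hτ.1.2 n)).trans ?_
  rw [ENNReal.ofReal_mul (Real.exp_pos b).le]
  gcongr
  exact M.Pinf_le_of_mem_Delta h0 h1 hτ n

-- The drift of `Z` under `P_ν` is `I`, so up to time `ν + c |log α| / I` the likelihood ratio stays
-- below `α ^ (-J * c / I)` for any `J > I`; it cannot outweigh the false alarm probability, of
-- order `α`, as soon as `J * c / I < 1`.
theorem tendsto_iSup_P_stop (hI : 0 < I)
    (hZ : TendstoInMeasure (M.P ν) (fun n ω => M.Z (ν + n) ν ω / n) atTop fun _ => I)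
    {ϱ : ℝ → ℝ} (hϱpos : ∀ᶠ α in 𝓝[>] 0, 0 < ϱ α) (hϱ0 : Tendsto ϱ (𝓝[>] 0) (𝓝 0))
    {c : ℝ} (hc0 : 0 < c) (hc1 : c < 1) :
    Tendsto (fun α => ⨆ τ ∈ M.Delta α (ϱ α),
      M.P ν {ω | τ ω ≤ ((ν + ⌈c * (|Real.log α| / I)⌉₊ : ℕ) : ℕ∞)}) (𝓝[>] 0) (𝓝 0) := by
  obtain ⟨J, hIJ, hJ⟩ := exists_between ((lt_div_iff₀ hc0).2 (mul_lt_of_lt_one_right hI hc1))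
  have hrate : Tendsto (fun α => |Real.log α| / I) (𝓝[>] 0) atTop :=
    tendsto_abs_log_nhdsGT_zero.atTop_div_const hI
  set K : ℝ → ℕ := fun α => ⌈c * (|Real.log α| / I)⌉₊
  have hKtop : Tendsto K (𝓝[>] 0) atTop :=
    tendsto_nat_ceil_atTop.comp (hrate.const_mul_atTop hc0)
  have hK : Tendsto (fun α => K α / |Real.log α|) (𝓝[>] 0) (𝓝 (c / I)) := by
    refine (((tendsto_nat_ceil_mul_div_atTop hc0.le).comp hrate).div_const I).congr' ?_
    filter_upwards [tendsto_abs_log_nhdsGT_zero.eventually_gt_atTop 0] with α hα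
    simp only [Function.comp_apply, K]
    field_simp
  have hJK : Tendsto (fun α => J * K α / |Real.log α|) (𝓝[>] 0) (𝓝 (J * (c / I))) := by
    simpa only [mul_div_assoc] using hK.const_mul J
  have hνK : Tendsto (fun α => ((ν + K α : ℕ) : ℝ) / |Real.log α|) (𝓝[>] 0) (𝓝 (0 + c / I)) := by
    simpa only [Nat.cast_add, add_div] using
      (tendsto_abs_log_nhdsGT_zero.const_div_atTop (ν : ℝ)).add hK
  have hJc : J * (c / I) < 1 := by
    rwa [← mul_div_assoc, div_lt_one hI, ← lt_div_iff₀ hc0]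
  have hfalseAlarm := ENNReal.tendsto_ofReal (tendsto_exp_mul_div_one_sub_pow hϱ0 hJc hJK hνK)
  have hbound := hfalseAlarm.add ((tendsto_P_mul_lt_Z hIJ hZ).comp hKtop)
  rw [ENNReal.ofReal_zero, add_zero] at hbound
  refine tendsto_of_tendsto_of_tendsto_of_le_of_le' tendsto_const_nhds hbound
    (.of_forall fun _ => zero_le) ?_
  filter_upwards [hϱpos, hϱ0.eventually_lt_const one_pos] with α hpos hlt
  exact iSup₂_le fun τ hτ => P_stop_le_of_mem_Delta hpos hlt hτ ν _ _

theorem eventually_mul_le_risk (hI : 0 < I)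
    (hZ : TendstoInMeasure (M.P ν) (fun n ω => M.Z (ν + n) ν ω / n) atTop fun _ => I)
    {ϱ : ℝ → ℝ} (hϱpos : ∀ᶠ α in 𝓝[>] 0, 0 < ϱ α) (hϱ0 : Tendsto ϱ (𝓝[>] 0) (𝓝 0))
    {a : ℝ≥0∞} (ha : a < 1) :
    ∀ᶠ α in 𝓝[>] 0, ∀ τ ∈ M.Delta α (ϱ α),
      a * ENNReal.ofReal (|Real.log α| / I) ≤ M.risk ν τ := by
  obtain ⟨c, hac, hc⟩ := ENNReal.lt_iff_exists_nnreal_btwn.1 ha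
  have hc0 : (0 : ℝ) < c := by exact_mod_cast zero_le.trans_lt hac
  have hc1 : (c : ℝ) < 1 := by exact_mod_cast hc
  set K : ℝ → ℕ := fun α => ⌈c * (|Real.log α| / I)⌉₊
  set u : ℝ → ℝ≥0∞ := fun α => ⨆ τ ∈ M.Delta α (ϱ α), M.P ν {ω | τ ω ≤ ((ν + K α : ℕ) : ℕ∞)}
  have hu : Tendsto u (𝓝[>] 0) (𝓝 0) := tendsto_iSup_P_stop hI hZ hϱpos hϱ0 hc0 hc1
  have hlim : Tendsto (fun α => c * (1 - u α)) (𝓝[>] 0) (𝓝 c) := by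
    simpa using ENNReal.Tendsto.const_mul (a := c)
      (ENNReal.Tendsto.sub tendsto_const_nhds hu (.inl ENNReal.one_ne_top))
      (.inr ENNReal.coe_ne_top)
  filter_upwards [hlim.eventually_const_lt hac] with α hα τ hτ
  have hceil : c * ENNReal.ofReal (|Real.log α| / I) ≤ K α := by
    rw [← ENNReal.ofReal_coe_nnreal, ← ENNReal.ofReal_mul c.coe_nonneg, ← ENNReal.ofReal_natCast]
    exact ENNReal.ofReal_le_ofReal (Nat.le_ceil _)
  calc a * ENNReal.ofReal (|Real.log α| / I)
      ≤ c * (1 - u α) * ENNReal.ofReal (|Real.log α| / I) := by gcongr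
    _ = c * ENNReal.ofReal (|Real.log α| / I) * (1 - u α) := mul_right_comm _ _ _
    _ ≤ K α * (1 - M.P ν {ω | τ ω ≤ ((ν + K α : ℕ) : ℕ∞)}) := by
        gcongr
        exact le_iSup₂ (f := fun τ _ => M.P ν {ω | τ ω ≤ ((ν + K α : ℕ) : ℕ∞)}) τ hτ
    _ ≤ M.risk ν τ := hτ.1.mul_le_risk ν (K α)

end LowerBound

/-! ### Conditional risk -/

theorem IsDetection.crisk_le_risk_div {M : ChangePointModel Ω} {τ : Ω → ℕ∞}
    (hτ : M.IsDetection τ) {ν k : ℕ} (hνk : ν ≤ k) :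
    M.crisk ν τ ≤ M.risk ν τ / (1 - M.Pinf {ω | τ ω ≤ (k : ℕ∞)}) := by
  rw [crisk, hτ.measure_lt, M.P_eq_Pinf le_rfl (hτ.2 ν)]
  gcongr

theorem CondA2.eventually_crisk_SR_threshold_le {M : ChangePointModel Ω} {I : ℝ} (hI : 0 < I)
    (hA2 : M.CondA2 I) {ϱ : ℝ → ℝ} (hϱpos : ∀ᶠ α in 𝓝[>] 0, 0 < ϱ α)
    (hϱ0 : Tendsto ϱ (𝓝[>] 0) (𝓝 0))
    (hϱlog : Tendsto (fun α : ℝ => |Real.log (ϱ α)| / |Real.log α|) (𝓝[>] 0) (𝓝 0))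
    {k : ℝ → ℕ}
    (hk : Tendsto (fun α => |Real.log α| + k α * Real.log (1 - ϱ α)) (𝓝[>] 0) atTop)
    {c : ℝ≥0∞} (hc : 1 < c) :
    ∀ᶠ α in 𝓝[>] 0, ∀ ν ≤ k α, M.crisk ν (M.SR ((1 - α) / (ϱ α * α))) ≤
      c * ENNReal.ofReal (|Real.log α| / I) := by
  obtain ⟨b, hb1, hbc⟩ := exists_between hc
  have hϱ1 := hϱ0.eventually_lt_const one_pos
  set u : ℝ → ℝ≥0∞ := fun α => ENNReal.ofReal (α / (1 - ϱ α) ^ k α)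
  have hu : Tendsto u (𝓝[>] 0) (𝓝 0) := by
    simpa using ENNReal.tendsto_ofReal (tendsto_div_one_sub_pow hϱ0 hk)
  have hlim : Tendsto (fun α => b / (1 - u α)) (𝓝[>] 0) (𝓝 b) := by
    simpa using ENNReal.Tendsto.const_div (a := b)
      (ENNReal.Tendsto.sub tendsto_const_nhds hu (.inl ENNReal.one_ne_top)) (.inl (by simp))
  filter_upwards [hA2.eventually_risk_SR_threshold_le hI hϱpos hϱlog hb1,
    M.eventually_SR_threshold_mem_Delta hϱpos hϱlog hϱ1, hϱpos, hϱ1,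
    hlim.eventually_lt_const hbc] with α hrisk hmem hpos hlt hα ν hν
  set T := M.SR ((1 - α) / (ϱ α * α))
  calc M.crisk ν T ≤ M.risk ν T / (1 - M.Pinf {ω | T ω ≤ (k α : ℕ∞)}) :=
        hmem.1.crisk_le_risk_div hν
    _ ≤ b * ENNReal.ofReal (|Real.log α| / I) / (1 - u α) := by
        gcongr
        · exact hrisk ν
        · exact M.Pinf_le_of_mem_Delta hpos hlt hmem (k α)
    _ = b / (1 - u α) * ENNReal.ofReal (|Real.log α| / I) := ENNReal.mul_div_right_comm
    _ ≤ c * ENNReal.ofReal (|Real.log α| / I) := by gcongr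

/-! ### First-order optimality -/

/-- First-order asymptotic optimality of the Shiryaev–Roberts procedures
`T_α = T((1 - α) / (ϱ_α α))` in the classes `Δ(α) = Δ(α, ϱ_α)` as `α → 0`, with respect to a risk
functional `ρ α` that may depend on `α`: both `inf_{τ ∈ Δ(α)} ρ α τ` and `ρ α T_α` are equivalent to
`|log α| / I`. The equivalence of the two with each other is a field of its own because quotients
in `ℝ≥0∞` do not compose unconditionally. -/
structure SRFirstOrderOptimal (I : ℝ) (ϱ : ℝ → ℝ) (ρ : ℝ → (Ω → ℕ∞) → ℝ≥0∞) : Prop where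
  ratio : Tendsto (fun α => (⨅ τ ∈ M.Delta α (ϱ α), ρ α τ) / ρ α (M.SR ((1 - α) / (ϱ α * α))))
    (𝓝[>] 0) (𝓝 1)
  attained : Tendsto (fun α => ρ α (M.SR ((1 - α) / (ϱ α * α))) /
    ENNReal.ofReal (|Real.log α| / I)) (𝓝[>] 0) (𝓝 1)
  optimal : Tendsto (fun α => (⨅ τ ∈ M.Delta α (ϱ α), ρ α τ) / ENNReal.ofReal (|Real.log α| / I))
    (𝓝[>] 0) (𝓝 1)

theorem SRFirstOrderOptimal.of_bounds {M : ChangePointModel Ω} {I : ℝ} (hI : 0 < I) {ϱ : ℝ → ℝ}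
    {ρ : ℝ → (Ω → ℕ∞) → ℝ≥0∞}
    (hmem : ∀ᶠ α in 𝓝[>] 0, M.SR ((1 - α) / (ϱ α * α)) ∈ M.Delta α (ϱ α))
    (hlower : ∀ c < 1, ∀ᶠ α in 𝓝[>] 0, ∀ τ ∈ M.Delta α (ϱ α),
      c * ENNReal.ofReal (|Real.log α| / I) ≤ ρ α τ)
    (hupper : ∀ c > 1, ∀ᶠ α in 𝓝[>] 0,
      ρ α (M.SR ((1 - α) / (ϱ α * α))) ≤ c * ENNReal.ofReal (|Real.log α| / I)) :
    M.SRFirstOrderOptimal I ϱ ρ := by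
  have hne_zero : ∀ᶠ α : ℝ in 𝓝[>] 0, ENNReal.ofReal (|Real.log α| / I) ≠ 0 := by
    filter_upwards [tendsto_abs_log_nhdsGT_zero.eventually_gt_atTop 0] with α hα
    exact (ENNReal.ofReal_pos.2 (div_pos hα hI)).ne'
  have hne_top : ∀ᶠ α : ℝ in 𝓝[>] 0, ENNReal.ofReal (|Real.log α| / I) ≠ ⊤ :=
    .of_forall fun _ => ENNReal.ofReal_ne_top
  have hattained := tendsto_div_nhds_one_of_mul_le_of_le_mul hne_zero hne_top
    (fun c hc => by filter_upwards [hmem, hlower c hc] with α hT hle using hle _ hT) hupper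
  have hoptimal := tendsto_div_nhds_one_of_mul_le_of_le_mul hne_zero hne_top
    (fun c hc => (hlower c hc).mono fun α hle => le_iInf₂ hle)
    (fun c hc => by
      filter_upwards [hmem, hupper c hc] with α hT hle using (iInf₂_le _ hT).trans hle)
  exact ⟨tendsto_div_nhds_one_of_common_equiv hne_zero hne_top hoptimal hattained,
    hattained, hoptimal⟩

end ChangePointModel

theorem statement3_general {Ω : Type} [MeasurableSpace Ω] (M : ChangePointModel Ω) {I : ℝ}
    (hI : 0 < I) (hA2 : M.CondA2 I) {ϱ : ℝ → ℝ} (hϱpos : ∀ᶠ α in 𝓝[>] 0, 0 < ϱ α)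
    (hϱ0 : Tendsto ϱ (𝓝[>] 0) (𝓝 0))
    (hϱlog : Tendsto (fun α : ℝ => |Real.log (ϱ α)| / |Real.log α|) (𝓝[>] 0) (𝓝 0)) :
    (∀ ν, M.SRFirstOrderOptimal I ϱ fun _ => M.risk ν) ∧
    M.SRFirstOrderOptimal I ϱ (fun _ τ => ⨆ ν, M.risk ν τ) ∧
    (∀ ν, M.SRFirstOrderOptimal I ϱ fun _ => M.crisk ν) ∧
    ∀ kstar : ℝ → ℕ,
      Tendsto (fun α => |Real.log α| + kstar α * Real.log (1 - ϱ α)) (𝓝[>] 0) atTop →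
      M.SRFirstOrderOptimal I ϱ fun α τ => ⨆ ν ∈ Iic (kstar α), M.crisk ν τ := by
  have hmem := M.eventually_SR_threshold_mem_Delta hϱpos hϱlog (hϱ0.eventually_lt_const one_pos)
  have hlower (ν : ℕ) (c : ℝ≥0∞) (hc : c < 1) :=
    ChangePointModel.eventually_mul_le_risk hI (hA2.tendstoInMeasure ν) hϱpos hϱ0 hc
  have hupper (c : ℝ≥0∞) (hc : c > 1) := hA2.eventually_risk_SR_threshold_le hI hϱpos hϱlog hc
  have hupper_cond (k : ℝ → ℕ) (hk) (c : ℝ≥0∞) (hc : c > 1) :=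
    hA2.eventually_crisk_SR_threshold_le (k := k) hI hϱpos hϱ0 hϱlog hk hc
  refine ⟨fun ν => .of_bounds hI hmem (hlower ν) fun c hc => (hupper c hc).mono fun α h => h ν,
    .of_bounds hI hmem (fun c hc => ?_) fun c hc => (hupper c hc).mono fun α h => iSup_le h,
    fun ν => .of_bounds hI hmem (fun c hc => ?_) fun c hc => ?_,
    fun kstar hk => .of_bounds hI hmem (fun c hc => ?_) fun c hc => ?_⟩
  · exact (hlower 0 c hc).mono fun α h τ hτ =>
      (h τ hτ).trans (le_iSup (fun ν => M.risk ν τ) 0)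
  · exact (hlower ν c hc).mono fun α h τ hτ => (h τ hτ).trans (M.risk_le_crisk ν τ)
  · have hν : Tendsto (fun α => |Real.log α| + ν * Real.log (1 - ϱ α)) (𝓝[>] 0) atTop :=
      tendsto_abs_log_nhdsGT_zero.atTop_add ((tendsto_log_one_sub hϱ0).const_mul (ν : ℝ))
    exact (hupper_cond (fun _ => ν) hν c hc).mono fun α h => h ν le_rfl
  · exact (hlower 0 c hc).mono fun α h τ hτ => (h τ hτ).trans <| (M.risk_le_crisk 0 τ).trans <|
      le_iSup₂ (f := fun ν (_ : ν ∈ Iic (kstar α)) => M.crisk ν τ) 0 (Nat.zero_le _)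
  · exact (hupper_cond kstar hk c hc).mono fun α h => iSup₂_le h

/-- Under condition (A2) and `ϱ_α → 0`, `|log ϱ_α|/|log α| → 0`, the SR
procedure `T_α = T((1-α)/(ϱ_α α))` is first-order asymptotically uniformly pointwise optimal
and minimax in the class `Δ(α) = Δ(α,ϱ_α)`: the ratios of the optimal risks to the risks of
`T_α` tend to `1`, and all these risks are asymptotically equivalent to `|log α|/I`; the same
holds for the conditional risks (pointwise, and maximally over `0 ≤ ν ≤ k*_α`) whenever
`k*_α → ∞` and `|log α| + k*_α log(1-ϱ_α) → +∞`. -/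
theorem statement3
    {Ω : Type} [m0 : MeasurableSpace Ω] (M : ChangePointModel Ω)
    (I : ℝ) (hI : 0 < I) (hA2 : M.CondA2 I)
    (ϱ : ℝ → ℝ) (hϱmem : ∀ α ∈ Set.Ioo (0 : ℝ) 1, ϱ α ∈ Set.Ioo (0 : ℝ) 1)
    (hϱ0 : Tendsto ϱ (𝓝[>] (0 : ℝ)) (𝓝 0))
    (hϱlog : Tendsto (fun α : ℝ => |Real.log (ϱ α)| / |Real.log α|) (𝓝[>] (0 : ℝ)) (𝓝 0)) :
    (∀ ν : ℕ,
      Tendsto (fun α : ℝ =>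
        (⨅ τ ∈ M.Delta α (ϱ α), M.risk ν τ) / M.risk ν (M.SR ((1 - α) / (ϱ α * α))))
        (𝓝[>] (0 : ℝ)) (𝓝 1)) ∧
    (Tendsto (fun α : ℝ =>
        (⨅ τ ∈ M.Delta α (ϱ α), ⨆ ν : ℕ, M.risk ν τ)
          / (⨆ ν : ℕ, M.risk ν (M.SR ((1 - α) / (ϱ α * α)))))
        (𝓝[>] (0 : ℝ)) (𝓝 1)) ∧
    (∀ ν : ℕ,
      Tendsto (fun α : ℝ =>
        M.risk ν (M.SR ((1 - α) / (ϱ α * α))) / ENNReal.ofReal (|Real.log α| / I))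
        (𝓝[>] (0 : ℝ)) (𝓝 1)) ∧
    (∀ ν : ℕ,
      Tendsto (fun α : ℝ =>
        (⨅ τ ∈ M.Delta α (ϱ α), M.risk ν τ) / ENNReal.ofReal (|Real.log α| / I))
        (𝓝[>] (0 : ℝ)) (𝓝 1)) ∧
    (Tendsto (fun α : ℝ =>
        (⨆ ν : ℕ, M.risk ν (M.SR ((1 - α) / (ϱ α * α)))) / ENNReal.ofReal (|Real.log α| / I))
        (𝓝[>] (0 : ℝ)) (𝓝 1)) ∧
    (Tendsto (fun α : ℝ =>
        (⨅ τ ∈ M.Delta α (ϱ α), ⨆ ν : ℕ, M.risk ν τ) / ENNReal.ofReal (|Real.log α| / I))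
        (𝓝[>] (0 : ℝ)) (𝓝 1)) ∧
    (∀ kstar : ℝ → ℕ,
      Tendsto kstar (𝓝[>] (0 : ℝ)) atTop →
      Tendsto (fun α : ℝ => |Real.log α| + (kstar α : ℝ) * Real.log (1 - ϱ α))
        (𝓝[>] (0 : ℝ)) atTop →
      (∀ ν : ℕ,
        Tendsto (fun α : ℝ =>
          (⨅ τ ∈ M.Delta α (ϱ α), M.crisk ν τ) / M.crisk ν (M.SR ((1 - α) / (ϱ α * α))))
          (𝓝[>] (0 : ℝ)) (𝓝 1)) ∧
      (Tendsto (fun α : ℝ =>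
          (⨅ τ ∈ M.Delta α (ϱ α), ⨆ ν ∈ Set.Iic (kstar α), M.crisk ν τ)
            / (⨆ ν ∈ Set.Iic (kstar α), M.crisk ν (M.SR ((1 - α) / (ϱ α * α)))))
          (𝓝[>] (0 : ℝ)) (𝓝 1)) ∧
      (∀ ν : ℕ,
        Tendsto (fun α : ℝ =>
          M.crisk ν (M.SR ((1 - α) / (ϱ α * α))) / ENNReal.ofReal (|Real.log α| / I))
          (𝓝[>] (0 : ℝ)) (𝓝 1)) ∧
      (∀ ν : ℕ,
        Tendsto (fun α : ℝ =>
          (⨅ τ ∈ M.Delta α (ϱ α), M.crisk ν τ) / ENNReal.ofReal (|Real.log α| / I))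
          (𝓝[>] (0 : ℝ)) (𝓝 1)) ∧
      (Tendsto (fun α : ℝ =>
          (⨆ ν ∈ Set.Iic (kstar α), M.crisk ν (M.SR ((1 - α) / (ϱ α * α))))
            / ENNReal.ofReal (|Real.log α| / I))
          (𝓝[>] (0 : ℝ)) (𝓝 1)) ∧
      (Tendsto (fun α : ℝ =>
          (⨅ τ ∈ M.Delta α (ϱ α), ⨆ ν ∈ Set.Iic (kstar α), M.crisk ν τ)
            / ENNReal.ofReal (|Real.log α| / I))
          (𝓝[>] (0 : ℝ)) (𝓝 1))) := by
  obtain ⟨hrisk, hrisk_sup, hcrisk, hcrisk_sup⟩ := statement3_general M hI hA2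
    (eventually_mem_Ioo_zero_one.mono fun α hα => (hϱmem α hα).1) hϱ0 hϱlog
  refine ⟨fun ν => (hrisk ν).ratio, hrisk_sup.ratio, fun ν => (hrisk ν).attained,
    fun ν => (hrisk ν).optimal, hrisk_sup.attained, hrisk_sup.optimal, fun kstar _ hk => ?_⟩
  exact ⟨fun ν => (hcrisk ν).ratio, (hcrisk_sup kstar hk).ratio, fun ν => (hcrisk ν).attained,
    fun ν => (hcrisk ν).optimal, (hcrisk_sup kstar hk).attained, (hcrisk_sup kstar hk).optimal⟩
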